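/- Let G be a finite group and M = (D, σ, α) a connected combinatorial map. Then, as an identity in ℂ, the number N_G(M) of G-flows on M equals |G|^{|E(M)|−|V(M)|} · Σ_{λ ∈ Irr(G)} χ_λ(1)^{|V(M)|−|E(M)|+|F(M)|}, where both exponents are integers (possibly negative). -/

import Mathlib

open Equiv

/-- The setoid on darts whose classes are the cycles (orbits) of a permutation. -/
def Equiv.Perm.cycleSetoid {D : Type*} (τ : Equiv.Perm D) : Setoid D :=
  ⟨τ.SameCycle, ⟨fun x => Equiv.Perm.SameCycle.refl τ x, fun h => h.symm, fun h h' => h.trans h'⟩⟩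

/-- The number of cycles (orbits) of a permutation. -/
noncomputable def Equiv.Perm.cycleCount {D : Type*} (τ : Equiv.Perm D) : ℕ :=
  Nat.card (Quotient τ.cycleSetoid)

/-- The ordered product of the values of `κ` around the `τ`-orbit of the dart `d`. -/
noncomputable def aroundProd {D G : Type*} [Group G] (τ : Equiv.Perm D) (κ : D → G) (d : D) : G :=
  ((List.range (Function.minimalPeriod (⇑τ) d)).map fun i => κ ((τ ^ i) d)).prod

/-- A `G`-labelling of a combinatorial map with edge involution `α`. -/
def IsGLabelling {D G : Type*} [Group G] (α : Equiv.Perm D) (κ : D → G) : Prop :=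
  ∀ d, κ (α d) = (κ d)⁻¹

/-- A `G`-flow on the combinatorial map `(D, σ, α)`. -/
def IsGFlow {D G : Type*} [Group G] (σ α : Equiv.Perm D) (κ : D → G) : Prop :=
  IsGLabelling α κ ∧ ∀ d, aroundProd σ κ d = 1

/-- A local `G`-tension on the combinatorial map `(D, σ, α)`: the product around every
face (orbit of `σ ∘ α`) is the identity. -/
def IsLocalTension {D G : Type*} [Group G] (σ α : Equiv.Perm D) (κ : D → G) : Prop :=
  IsGLabelling α κ ∧ ∀ d, aroundProd (σ * α) κ d = 1

/-- A closed walk in the combinatorial map `(D, σ, α)`, as a nonempty list of darts. -/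
def IsClosedWalk {D : Type*} (σ α : Equiv.Perm D) (W : List D) : Prop :=
  ∃ h : W ≠ [], W.Chain' (fun a b => σ.SameCycle (α a) b) ∧
    σ.SameCycle (α (W.getLast h)) (W.head h)

/-- A global `G`-tension on the combinatorial map `(D, σ, α)`. -/
def IsGlobalTension {D G : Type*} [Group G] (σ α : Equiv.Perm D) (κ : D → G) : Prop :=
  IsGLabelling α κ ∧ ∀ W : List D, IsClosedWalk σ α W → (W.map κ).prod = 1

/-- Connectivity of the combinatorial map `(D, σ, α)`: the group generated by `σ` and `α`
acts transitively on the darts. -/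
def MapConnected {D : Type*} (σ α : Equiv.Perm D) : Prop :=
  ∀ d d' : D, ∃ g ∈ Subgroup.closure ({σ, α} : Set (Equiv.Perm D)), g d = d'

/-- A covering of combinatorial maps `(D', σ', α') → (D, σ, α)`. -/
def IsMapCovering {D' D : Type*} (σ' α' : Equiv.Perm D') (σ α : Equiv.Perm D)
    (p : D' → D) : Prop :=
  Function.Surjective p ∧ (∀ d, p (σ' d) = σ (p d)) ∧ (∀ d, p (α' d) = α (p d)) ∧
    ∀ d₁ d₂, σ'.SameCycle d₁ d₂ → p d₁ = p d₂ → d₁ = d₂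

section
open CategoryTheory

theorem flow_schur_exists {G : Type} [Group G] [Fintype G] (V W : FDRep ℂ G)
    (A : V →ₗ[ℂ] W) :
    ∃ f : V ⟶ W, f.hom.hom.hom = ∑ g : G, W.ρ g ∘ₗ A ∘ₗ V.ρ g⁻¹ := by
  refine ⟨⟨InducedCategory.homMk (ModuleCat.ofHom (∑ g : G, W.ρ g ∘ₗ A ∘ₗ V.ρ g⁻¹)),
    fun h => ?_⟩, rfl⟩
  apply InducedCategory.hom_ext
  apply ModuleCat.hom_ext
  show (∑ g : G, W.ρ g ∘ₗ A ∘ₗ V.ρ g⁻¹) ∘ₗ V.ρ h = W.ρ h ∘ₗ (∑ g : G, W.ρ g ∘ₗ A ∘ₗ V.ρ g⁻¹)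
  ext v
  simp only [LinearMap.comp_apply, LinearMap.sum_apply, map_sum]
  refine Fintype.sum_equiv (Equiv.mulLeft h⁻¹) _ _ fun g => ?_
  simp only [Equiv.coe_mulLeft, ← Module.End.mul_apply, ← map_mul]
  simp

theorem flow_schur_ne {G : Type} [Group G] [Fintype G] (V W : FDRep ℂ G)
    [Simple V] [Simple W] (h : ¬ Nonempty (V ≅ W)) (A : V →ₗ[ℂ] W) :
    ∑ g : G, W.ρ g ∘ₗ A ∘ₗ V.ρ g⁻¹ = 0 := by
  obtain ⟨f, hf⟩ := flow_schur_exists V W A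
  have h1 := FDRep.finrank_hom_simple_simple V W
  rw [if_neg h] at h1
  have h2 := Module.finrank_zero_iff.1 h1
  have : f = 0 := Subsingleton.elim _ _
  rw [← hf, this]; rfl

theorem flow_schur_eq {G : Type} [Group G] [Fintype G] (V : FDRep ℂ G)
    [Simple V] (A : V →ₗ[ℂ] V) :
    (Module.finrank ℂ V : ℂ) • ∑ g : G, V.ρ g ∘ₗ A ∘ₗ V.ρ g⁻¹ =
      ((Fintype.card G : ℂ) * LinearMap.trace ℂ V A) • LinearMap.id := by
  obtain ⟨f, hf⟩ := flow_schur_exists V V A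
  have h1 : Module.finrank ℂ (V ⟶ V) = 1 := finrank_endomorphism_simple_eq_one ℂ V
  obtain ⟨c, hc⟩ := (finrank_eq_one_iff_of_nonzero' (𝟙 V) (id_nonzero V)).1 h1 f
  have h3 : ∑ g : G, V.ρ g ∘ₗ A ∘ₗ V.ρ g⁻¹ = c • LinearMap.id := by
    rw [← hf, ← hc]; rfl
  have h4 := congrArg (LinearMap.trace ℂ V) h3
  have h5 : ∀ g : G, LinearMap.trace ℂ V (V.ρ g ∘ₗ A ∘ₗ V.ρ g⁻¹) = LinearMap.trace ℂ V A := by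
    intro g
    rw [LinearMap.trace_comp_comm', LinearMap.comp_assoc, ← Module.End.mul_eq_comp (V.ρ g⁻¹),
      ← map_mul]
    rw [inv_mul_cancel, map_one]; rfl
  rw [map_sum, Finset.sum_congr rfl fun g _ => h5 g] at h4
  simp only [Finset.sum_const, Finset.card_univ, map_smul, LinearMap.trace_id, nsmul_eq_mul,
    smul_eq_mul] at h4
  rw [h3, h4, smul_smul, mul_comm]

theorem flow_finrank_ne {G : Type} [Group G] (V : FDRep ℂ G)
    [Simple V] : Module.finrank ℂ V ≠ 0 := by
  intro h
  have h2 := Module.finrank_zero_iff.1 h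
  apply id_nonzero V
  ext x
  exact Subsingleton.elim _ _

/-- matrix of a representation in a fixed basis -/
noncomputable def flowMat {G : Type} [Group G] (V : FDRep ℂ G) (g : G) :
    Matrix (Fin (Module.finrank ℂ V)) (Fin (Module.finrank ℂ V)) ℂ :=
  LinearMap.toMatrix (Module.finBasis ℂ V) (Module.finBasis ℂ V) (V.ρ g)

theorem flowMat_mul {G : Type} [Group G] (V : FDRep ℂ G) (g h : G) :
    flowMat V (g * h) = flowMat V g * flowMat V h := by
  simp only [flowMat, map_mul, LinearMap.toMatrix_mul]

theorem flowMat_one {G : Type} [Group G] (V : FDRep ℂ G) :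
    flowMat V 1 = 1 := by
  simp only [flowMat, map_one, LinearMap.toMatrix_one]

theorem flowMat_trace {G : Type} [Group G] (V : FDRep ℂ G) (g : G) :
    (flowMat V g).trace = V.character g := by
  rw [flowMat, FDRep.character, LinearMap.trace_eq_matrix_trace ℂ (Module.finBasis ℂ V)]

theorem flowMat_aux {G : Type} [Group G] [Fintype G] (V W : FDRep ℂ G)
    (B : Matrix (Fin (Module.finrank ℂ W)) (Fin (Module.finrank ℂ V)) ℂ) :
    LinearMap.toMatrix (Module.finBasis ℂ V) (Module.finBasis ℂ W)
      (∑ g : G, W.ρ g ∘ₗ (Matrix.toLin (Module.finBasis ℂ V) (Module.finBasis ℂ W) B) ∘ₗ V.ρ g⁻¹)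
      = ∑ g : G, flowMat W g * B * flowMat V g⁻¹ := by
  rw [map_sum]
  refine Finset.sum_congr rfl fun g _ => ?_
  rw [LinearMap.toMatrix_comp _ (Module.finBasis ℂ W), LinearMap.toMatrix_comp _ (Module.finBasis ℂ V),
    LinearMap.toMatrix_toLin, ← Matrix.mul_assoc]
  rfl

theorem flowMat_entry {G : Type} [Group G] [Fintype G] (V W : FDRep ℂ G)
    (a b : Fin (Module.finrank ℂ W)) (c e : Fin (Module.finrank ℂ V)) :
    (∑ g : G, flowMat W g * (Matrix.single b c 1 : Matrix _ _ ℂ) * flowMat V g⁻¹) a e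
      = ∑ g : G, flowMat W g a b * flowMat V g⁻¹ c e := by
  rw [Matrix.sum_apply]
  refine Finset.sum_congr rfl fun g _ => ?_
  rw [Matrix.mul_apply, Finset.sum_eq_single c]
  · simp
  · intro x _ hx
    simp [Matrix.mul_single_apply_of_ne, hx]
  · simp

theorem flowMat_orth_ne {G : Type} [Group G] [Fintype G] (V W : FDRep ℂ G)
    [Simple V] [Simple W] (h : ¬ Nonempty (V ≅ W))
    (a b : Fin (Module.finrank ℂ W)) (c e : Fin (Module.finrank ℂ V)) :
    ∑ g : G, flowMat W g a b * flowMat V g⁻¹ c e = 0 := by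
  rw [← flowMat_entry, ← flowMat_aux, flow_schur_ne V W h, map_zero]; rfl

theorem flowMat_orth_eq {G : Type} [Group G] [Fintype G] (V : FDRep ℂ G)
    [Simple V] (a b c e : Fin (Module.finrank ℂ V)) :
    ∑ g : G, flowMat V g a b * flowMat V g⁻¹ c e =
      if a = e ∧ b = c then (Fintype.card G : ℂ) / Module.finrank ℂ V else 0 := by
  have hn : (Module.finrank ℂ V : ℂ) ≠ 0 := Nat.cast_ne_zero.2 (flow_finrank_ne V)
  rw [← mul_right_inj' hn, ← flowMat_entry, ← flowMat_aux, ← smul_eq_mul, ← Matrix.smul_apply,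
    ← map_smul, flow_schur_eq, map_smul, LinearMap.toMatrix_id, Matrix.smul_apply,
    LinearMap.trace_eq_matrix_trace ℂ (Module.finBasis ℂ V), LinearMap.toMatrix_toLin, Matrix.one_apply]
  by_cases h1 : a = e <;> by_cases h2 : b = c
  · subst h1 h2
    simp; field_simp
  · simp [h1, h2, Matrix.trace_single_eq_of_ne]
  · simp [h1, h2]
  · simp [h1, h2]

theorem flow_simple_of {G : Type} [Group G] [Fintype G] (M : Type) [AddCommGroup M]
    [Module ℂ M] [Module.Finite ℂ M] (r : Representation ℂ G M) [r.IsIrreducible] :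
    Simple (FDRep.of r) := by
  rw [FDRep.simple_iff_char_is_norm_one]
  have : NeZero (Nat.card G : ℂ) := inferInstance
  let : Invertible (Nat.card G : ℂ) := invertibleOfNonzero (NeZero.ne _)
  have := Representation.char_orthonormal r r
  rw [if_pos ⟨Representation.Equiv.refl _⟩, inv_mul_eq_iff_eq_mul₀ (NeZero.ne _), mul_one] at this
  exact this

open scoped Classical in
theorem flow_col {G : Type} [Group G] [Fintype G] 
    (ι : Type) [Fintype ι] (ρ : ι → FDRep ℂ G)
    (hsimple : ∀ i, Simple (ρ i))
    (hpairwise : ∀ i j, Nonempty (ρ i ≅ ρ j) → i = j)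
    (hcomplete : ∀ V : FDRep ℂ G, Simple V → ∃ i, Nonempty (V ≅ ρ i)) (g : G) :
    ∑ i, (Module.finrank ℂ (ρ i) : ℂ) * (flowMat (ρ i) g).trace =
      if g = 1 then (Fintype.card G : ℂ) else 0 := by
  let f : G → ℂ := fun g => ∑ i, (Module.finrank ℂ (ρ i) : ℂ) * (flowMat (ρ i) g⁻¹).trace -
      if g = 1 then (Fintype.card G : ℂ) else 0
  suffices hf : ∀ g, f g = 0 by
    have := hf g⁻¹
    simp only [f, inv_inv, sub_eq_zero, inv_eq_one] at this
    exact this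
  -- acts as zero on each `ρ j`
  have h1 : ∀ j, ∑ g : G, f g • flowMat (ρ j) g = 0 := by
    intro j
    have := hsimple j
    ext a b
    simp only [f, sub_smul, Finset.sum_sub_distrib, Matrix.sub_apply, ite_smul, zero_smul,
      Finset.sum_ite_eq', Finset.mem_univ, if_true, flowMat_one, Finset.sum_smul]
    rw [Finset.sum_comm, Matrix.sum_apply, Finset.sum_eq_single j]
    · simp only [Matrix.sum_apply, Matrix.smul_apply, smul_eq_mul, Matrix.trace, Matrix.diag_apply]
      have hn : (Module.finrank ℂ (ρ j) : ℂ) ≠ 0 := Nat.cast_ne_zero.2 (flow_finrank_ne _)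
      simp only [mul_assoc, Finset.sum_mul, ← Finset.mul_sum]
      rw [Finset.sum_comm]
      simp only [mul_comm (flowMat (ρ j) _⁻¹ _ _), flowMat_orth_eq]
      rw [Matrix.zero_apply, sub_eq_zero, Finset.sum_eq_single a]
      · by_cases hab : a = b
        · subst hab; simp; field_simp
        · have : ¬ b = a := fun h => hab h.symm
          simp [hab, this]
      · intro x _ hx
        rw [if_neg]
        rintro ⟨h, h'⟩; exact hx h.symm
      · simp
    · intro i _ hij
      have := hsimple i
      simp only [Matrix.sum_apply, Matrix.smul_apply, smul_eq_mul, Matrix.trace, Matrix.diag_apply]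
      simp only [mul_assoc, Finset.sum_mul, ← Finset.mul_sum]
      rw [Finset.sum_comm]
      simp only [mul_comm (flowMat (ρ i) _⁻¹ _ _)]
      rw [Finset.sum_eq_zero, mul_zero]
      intro x _
      exact flowMat_orth_ne _ _ (fun h => hij (hpairwise _ _ h)) _ _ _ _
    · simp
  have h2 : ∀ j, ∑ g : G, f g • (ρ j).ρ g = 0 := by
    intro j
    apply (LinearMap.toMatrix (Module.finBasis ℂ (ρ j)) (Module.finBasis ℂ (ρ j))).injective
    rw [map_sum, map_zero, ← h1 j]
    refine Finset.sum_congr rfl fun g _ => ?_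
    rw [map_smul]; rfl
  have h3 : ∀ V : FDRep ℂ G, Simple V → ∑ g : G, f g • V.ρ g = 0 := by
    intro V hV
    obtain ⟨j, ⟨e⟩⟩ := hcomplete V hV
    have := h2 j
    simp only [FDRep.Iso.conj_ρ e, ← map_smul, ← map_sum] at this
    exact (LinearEquiv.map_eq_zero_iff _).1 this
  let z : MonoidAlgebra ℂ G := ∑ g, MonoidAlgebra.single g (f g)
  have : NeZero (Nat.card G : ℂ) := inferInstance
  have h4 : ∀ S : Submodule (MonoidAlgebra ℂ G) (MonoidAlgebra ℂ G),
      IsSimpleModule (MonoidAlgebra ℂ G) S → ∀ m ∈ S, z * m = 0 := by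
    intro S hS m hm
    have h8 : ∀ x, (Representation.ofModule' (k := ℂ) (G := G) S).asAlgebraHom x =
        Algebra.lsmul ℂ ℂ S x := by
      intro x
      rw [Representation.asAlgebraHom_def, Representation.ofModule', Equiv.apply_symm_apply]
    let e : (Representation.ofModule' (k := ℂ) (G := G) S).asModule ≃ₗ[MonoidAlgebra ℂ G] S :=
      { (Representation.ofModule' (k := ℂ) (G := G) S).asModuleEquiv with
        map_smul' := fun x m => by
          show (Representation.ofModule' (k := ℂ) (G := G) S).asModuleEquiv (x • m) = _
          rw [Representation.asModuleEquiv_map_smul, h8]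
          rfl }
    have : (Representation.ofModule' (k := ℂ) (G := G) S).IsIrreducible := by
      rw [Representation.irreducible_iff_isSimpleModule_asModule]
      exact IsSimpleModule.congr e
    have : Module.Finite ℂ S :=
      Module.Finite.trans (MonoidAlgebra ℂ G) _
    have h9 := h3 _ (flow_simple_of _ (Representation.ofModule' (k := ℂ) (G := G) S))
    have h6 : (Representation.ofModule' (k := ℂ) (G := G) S).asAlgebraHom z = 0 := by
      simp only [z, map_sum, Representation.asAlgebraHom_single]
      exact h9
    rw [h8] at h6
    have h7 := congrArg (fun l => l (⟨m, hm⟩ : S)) h6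
    exact congrArg Subtype.val h7
  have h5 : (1 : MonoidAlgebra ℂ G) ∈ (⊤ : Submodule (MonoidAlgebra ℂ G) (MonoidAlgebra ℂ G)) :=
    trivial
  rw [← IsSemisimpleModule.sSup_simples_eq_top (MonoidAlgebra ℂ G) (MonoidAlgebra ℂ G),
    sSup_eq_iSup'] at h5
  have h6 : z * 1 = 0 := by
    refine Submodule.iSup_induction _ (motive := fun m => z * m = 0) h5 ?_ ?_ ?_
    · intro S m hm; exact h4 S.1 S.2 m hm
    · simp
    · intro x y hx hy; rw [mul_add, hx, hy, add_zero]
  intro g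
  rw [mul_one] at h6
  have h7 := congrArg (fun w : MonoidAlgebra ℂ G => w.coeff g) h6
  simp only [z] at h7
  simpa [MonoidAlgebra.coeff_sum, Finsupp.single_apply] using h7

end

theorem flow_path {I : Type} [Fintype I] [DecidableEq I] (k : ℕ) (M : ℕ → Matrix I I ℂ) (x y : I) :
    ((List.range (k + 1)).map M).prod x y =
      ∑ q : Fin k → I, ∏ t : Fin (k + 1),
        M t ((Fin.cons x q : Fin (k + 1) → I) t) ((Fin.snoc q y : Fin (k + 1) → I) t) := by
  induction k generalizing M x with
  | zero => simp [Fin.snoc]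
  | succ k ih =>
    rw [List.range_succ_eq_map, List.map_cons, List.prod_cons, List.map_map, Matrix.mul_apply]
    rw [← (Fin.consEquiv (fun _ : Fin (k + 1) => I)).sum_comp, Fintype.sum_prod_type]
    refine Finset.sum_congr rfl fun z _ => ?_
    rw [ih, Finset.mul_sum]
    refine Finset.sum_congr rfl fun q _ => ?_
    change _ = ∏ t : Fin (k + 2), M t
      ((Fin.cons x (Fin.cons z q : Fin (k + 1) → I) : Fin (k + 2) → I) t)
      ((Fin.snoc (Fin.cons z q : Fin (k + 1) → I) y : Fin (k + 2) → I) t)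
    rw [Fin.prod_univ_succ (n := k + 1), ← Fin.cons_snoc_eq_snoc_cons]
    simp only [ Fin.cons_zero, Fin.cons_succ, Fin.val_zero, Fin.val_succ,
      Function.comp_apply]

theorem flow_cyc {I : Type} [Fintype I] [DecidableEq I] (k : ℕ) (hk : 0 < k)
    (M : ℕ → Matrix I I ℂ) (w : I → ℂ) :
    ∑ x, w x * ((List.range k).map M).prod x x =
      ∑ q : Fin k → I, w (q ⟨0, hk⟩) * ∏ t : Fin k, M t (q t) (q (finRotate k t)) := by
  obtain ⟨m, rfl⟩ : ∃ m, k = m + 1 := ⟨k - 1, by omega⟩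
  rw [← (Fin.consEquiv (fun _ : Fin (m + 1) => I)).sum_comp, Fintype.sum_prod_type]
  refine Finset.sum_congr rfl fun x _ => ?_
  rw [flow_path, Finset.mul_sum]
  refine Finset.sum_congr rfl fun q _ => ?_
  simp only [Fin.consEquiv_apply]
  congr 1
  refine Finset.prod_congr rfl fun t _ => ?_
  congr 1
  refine Fin.lastCases ?_ (fun j => ?_) t
  · rw [Fin.snoc_last, finRotate_last, Fin.cons_zero]
  · rw [Fin.snoc_castSucc, finRotate_apply, Fin.coeSucc_eq_succ, Fin.cons_succ]

theorem flow_minPer_pos {D : Type} [Finite D] (τ : Equiv.Perm D) (d : D) :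
    0 < Function.minimalPeriod τ d :=
  Function.minimalPeriod_pos_of_mem_periodicPts
    (Function.mem_periodicPts.2 ⟨orderOf τ, orderOf_pos τ, by
      rw [Function.IsPeriodicPt, Function.IsFixedPt, ← Equiv.Perm.coe_pow, pow_orderOf_eq_one]; rfl⟩)

theorem flow_pow_minPer {D : Type} (τ : Equiv.Perm D) (d : D) :
    (τ ^ Function.minimalPeriod τ d) d = d := by
  rw [Equiv.Perm.coe_pow]; exact Function.iterate_minimalPeriod

theorem flow_orbit_bij {D : Type} [Finite D] (τ : Equiv.Perm D) :
    Function.Bijective (fun p : (Σ v : Quotient τ.cycleSetoid, Fin (Function.minimalPeriod τ v.out)) =>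
      (τ ^ (p.2 : ℕ)) p.1.out) := by
  have key : ∀ (v : Quotient τ.cycleSetoid) (n : ℕ), (Quotient.mk _ ((τ ^ n) v.out)) = v := by
    intro v n
    conv_rhs => rw [← Quotient.out_eq v]
    apply Quotient.sound
    have h : τ.SameCycle v.out ((τ ^ n) v.out) := ⟨(n : ℤ), by simp⟩
    exact h.symm
  constructor
  · rintro ⟨v, t⟩ ⟨v', t'⟩ h
    simp only at h
    have h1 := key v t
    rw [h, key v' t'] at h1
    subst h1
    simp only [Equiv.Perm.coe_pow] at h
    have := Function.iterate_injOn_Iio_minimalPeriod (f := τ) (x := Quotient.out v') t.2 t'.2 h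
    congr 1
    exact Fin.ext this
  · intro d
    have h : τ.SameCycle (Quotient.mk τ.cycleSetoid d).out d := Quotient.exact (Quotient.out_eq (Quotient.mk τ.cycleSetoid d))
    obtain ⟨n, hn⟩ := h.exists_nat_pow_eq
    refine ⟨⟨Quotient.mk _ d, ⟨n % Function.minimalPeriod τ _, Nat.mod_lt _ (flow_minPer_pos τ _)⟩⟩, ?_⟩
    simp only [Equiv.Perm.coe_pow, Function.iterate_mod_minimalPeriod_eq]
    rw [← Equiv.Perm.coe_pow, hn]

theorem flow_around_step {D G : Type} [Group G] (σ : Equiv.Perm D) (κ : D → G) (d : D) :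
    κ d * aroundProd σ κ (σ d) = aroundProd σ κ d * κ d := by
  have hp : Function.minimalPeriod σ (σ d) = Function.minimalPeriod σ d := by
    by_cases h : d ∈ Function.periodicPts σ
    · exact Function.minimalPeriod_apply h
    · rw [Function.minimalPeriod_eq_zero_of_notMem_periodicPts h,
        Function.minimalPeriod_eq_zero_of_notMem_periodicPts]
      intro h2
      apply h
      obtain ⟨n, hn, h3⟩ := h2
      refine ⟨n, hn, ?_⟩
      apply σ.injective
      have : σ (σ^[n] d) = σ^[n] (σ d) := by rw [← Function.iterate_succ_apply' (⇑σ), Function.iterate_succ_apply]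
      rw [this]; exact h3
  have h1 := List.prod_range_succ (fun i => κ ((σ ^ i) d)) (Function.minimalPeriod σ d)
  have h2 := List.prod_range_succ' (fun i => κ ((σ ^ i) d)) (Function.minimalPeriod σ d)
  rw [h1] at h2
  simp only [flow_pow_minPer, pow_zero, Equiv.Perm.one_apply] at h2
  rw [aroundProd, aroundProd, hp, h2]
  simp only [pow_succ, Equiv.Perm.mul_apply]

theorem flow_around_iff {D G : Type} [Finite D] [Group G] (σ : Equiv.Perm D) (κ : D → G) :
    (∀ d, aroundProd σ κ d = 1) ↔ ∀ v : Quotient σ.cycleSetoid, aroundProd σ κ v.out = 1 := by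
  refine ⟨fun h v => h _, fun h d => ?_⟩
  have hs : ∀ d, aroundProd σ κ d = 1 → aroundProd σ κ (σ d) = 1 := by
    intro d hd
    have := flow_around_step σ κ d
    rw [hd, one_mul] at this
    exact mul_eq_left.1 this
  have hn : ∀ (n : ℕ) d, aroundProd σ κ d = 1 → aroundProd σ κ ((σ ^ n) d) = 1 := by
    intro n
    induction n with
    | zero => intro d hd; simpa using hd
    | succ n ih => intro d hd; rw [pow_succ, Equiv.Perm.mul_apply]; exact ih _ (hs _ hd)
  have h2 : σ.SameCycle (Quotient.mk σ.cycleSetoid d).out d := Quotient.exact (Quotient.out_eq (Quotient.mk σ.cycleSetoid d))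
  obtain ⟨n, hn'⟩ := h2.exists_nat_pow_eq
  rw [← hn']
  exact hn n _ (h _)

open scoped Classical in
theorem flow_vertex {D G I : Type} [Fintype D] [Group G] [Fintype G] [Fintype I] [DecidableEq I]
    (σ : Equiv.Perm D) (R : G →* Matrix I I ℂ) (w : I → ℂ)
    (hcol : ∀ g, ∑ x, w x * R g x x = if g = 1 then (Fintype.card G : ℂ) else 0) (κ : D → G) :
    (if ∀ d, aroundProd σ κ d = 1 then (Fintype.card G : ℂ) ^ σ.cycleCount else 0) =
      ∑ p : D → I, (∏ v : Quotient σ.cycleSetoid, w (p v.out)) * ∏ d, R (κ d) (p d) (p (σ d)) := by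
  have h0 : (if ∀ d, aroundProd σ κ d = 1 then (Fintype.card G : ℂ) ^ σ.cycleCount else 0) =
      ∏ v : Quotient σ.cycleSetoid, if aroundProd σ κ v.out = 1 then (Fintype.card G : ℂ) else 0 := by
    rw [Finset.prod_ite_zero]
    simp only [flow_around_iff, Finset.mem_univ, true_implies, Finset.prod_const, Finset.card_univ,
      Equiv.Perm.cycleCount, Nat.card_eq_fintype_card]
  rw [h0]
  have h1 : ∀ v : Quotient σ.cycleSetoid,
      (if aroundProd σ κ v.out = 1 then (Fintype.card G : ℂ) else 0) =
      ∑ q : Fin (Function.minimalPeriod σ v.out) → I, w (q ⟨0, flow_minPer_pos _ _⟩) *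
        ∏ t : Fin (Function.minimalPeriod σ v.out),
          R (κ ((σ ^ (t : ℕ)) v.out)) (q t) (q (finRotate _ t)) := by
    intro v
    rw [← hcol, aroundProd, map_list_prod, List.map_map,
      ← flow_cyc _ _ (fun n => R (κ ((σ ^ n) v.out)))]
    rfl
  rw [Finset.prod_congr rfl fun v _ => h1 v, Finset.prod_univ_sum, Fintype.piFinset_univ]
  let e := Equiv.ofBijective _ (flow_orbit_bij σ)
  let E : (D → I) ≃ ((v : Quotient σ.cycleSetoid) → Fin (Function.minimalPeriod σ v.out) → I) :=
    (e.arrowCongr (Equiv.refl I)).symm.trans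
      (Equiv.piCurry (fun (v : Quotient σ.cycleSetoid) (_ : Fin (Function.minimalPeriod σ v.out)) => I))
  have hE : ∀ p v t, E p v t = p ((σ ^ (t : ℕ)) v.out) := fun p v t => rfl
  symm
  refine Fintype.sum_equiv E _ _ fun p => ?_
  rw [Finset.prod_mul_distrib]
  congr 1
  rw [← e.prod_comp, Fintype.prod_sigma]
  refine Finset.prod_congr rfl fun v _ => Finset.prod_congr rfl fun t _ => ?_
  rw [hE, hE]
  show R (κ ((σ ^ (t : ℕ)) v.out)) (p ((σ ^ (t : ℕ)) v.out)) (p (σ ((σ ^ (t : ℕ)) v.out))) = _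
  refine congrArg (fun z => R (κ ((σ ^ (t : ℕ)) v.out)) (p ((σ ^ (t : ℕ)) v.out)) (p z)) ?_
  have hk := flow_minPer_pos σ v.out
  have hm := flow_pow_minPer σ v.out
  clear_value e E
  clear hE E e h1 h0
  generalize Function.minimalPeriod σ v.out = k at *
  obtain ⟨m, rfl⟩ : ∃ m, k = m + 1 := ⟨k - 1, by omega⟩
  rw [← Equiv.Perm.mul_apply, ← pow_succ']
  refine Fin.lastCases ?_ (fun j => ?_) t
  · rw [finRotate_last]; simpa using hm
  · rw [finRotate_apply, Fin.coeSucc_eq_succ]; simp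

theorem flow_edge_cases {D : Type} (α : Equiv.Perm D) (hinv : ∀ d, α (α d) = d) (d : D) :
    d = (Quotient.mk α.cycleSetoid d).out ∨ d = α (Quotient.mk α.cycleSetoid d).out := by
  have h2 : α.SameCycle (Quotient.mk α.cycleSetoid d).out d := Quotient.exact (Quotient.out_eq (Quotient.mk α.cycleSetoid d))
  obtain ⟨n, hn⟩ := h2
  have hsq : α * α = 1 := Equiv.ext hinv
  obtain ⟨m, hm⟩ := Int.even_or_odd' n
  have h3 : α ^ (2 * m) = 1 := by rw [zpow_mul, zpow_two, hsq, one_zpow]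
  rcases hm with rfl | rfl
  · rw [h3] at hn; exact Or.inl hn.symm
  · rw [zpow_add, h3, one_mul, zpow_one] at hn; exact Or.inr hn.symm

theorem flow_mk_alpha {D : Type} (α : Equiv.Perm D) (d : D) :
    Quotient.mk α.cycleSetoid (α d) = Quotient.mk α.cycleSetoid d :=
  Quotient.sound (show α.SameCycle (α d) d from
    Equiv.Perm.SameCycle.symm (show α.SameCycle d (α d) from ⟨1, by simp⟩))

open scoped Classical in
theorem flow_edge_prod {D : Type} [Fintype D] (α : Equiv.Perm D)
    (hinv : ∀ d, α (α d) = d) (hfpf : ∀ d, α d ≠ d) (f : D → ℂ) :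
    ∏ d, f d = ∏ e : Quotient α.cycleSetoid, (f e.out * f (α e.out)) := by
  have hb : Function.Bijective (fun p : Quotient α.cycleSetoid × Bool =>
      if p.2 then p.1.out else α p.1.out) := by
    constructor
    · rintro ⟨e, b⟩ ⟨e', b'⟩ h
      have h1 := congrArg (Quotient.mk α.cycleSetoid) h
      have : e = e' := by
        cases b <;> cases b' <;> simpa [flow_mk_alpha] using h1
      subst this
      cases b <;> cases b' <;> simp at h ⊢
      · exact hfpf _ h
      · exact hfpf _ h.symm
    · intro d
      rcases flow_edge_cases α hinv d with h | h
      · exact ⟨(Quotient.mk _ d, true), by simpa using h.symm⟩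
      · exact ⟨(Quotient.mk _ d, false), by simpa using h.symm⟩
  rw [← (Equiv.ofBijective _ hb).prod_comp, Fintype.prod_prod_type]
  refine Finset.prod_congr rfl fun e _ => ?_
  simp

open scoped Classical in
theorem flow_edge_sum {D G : Type} [Fintype D] [Group G] [Fintype G] (α : Equiv.Perm D)
    (hinv : ∀ d, α (α d) = d) (hfpf : ∀ d, α d ≠ d) (f : D → G → ℂ) :
    ∑ κ : {κ : D → G // IsGLabelling α κ}, ∏ d, f d (κ.1 d) =
      ∏ e : Quotient α.cycleSetoid, ∑ g, f e.out g * f (α e.out) g⁻¹ := by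
  rw [Finset.prod_univ_sum, Fintype.piFinset_univ]
  have hb : Function.Bijective (fun (κ : {κ : D → G // IsGLabelling α κ})
      (e : Quotient α.cycleSetoid) => κ.1 e.out) := by
    constructor
    · intro κ κ' h
      ext d
      have h1 := congrFun h (Quotient.mk _ d)
      simp only at h1
      rcases flow_edge_cases α hinv d with h2 | h2
      · rw [h2]; exact h1
      · rw [h2, κ.2, κ'.2, h1]
    · intro h
      refine ⟨⟨fun d => if d = (Quotient.mk α.cycleSetoid d).out then h (Quotient.mk _ d)
        else (h (Quotient.mk _ d))⁻¹, ?_⟩, ?_⟩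
      · intro d
        simp only [flow_mk_alpha]
        rcases flow_edge_cases α hinv d with h2 | h2
        · have : ¬ α d = (Quotient.mk α.cycleSetoid d).out := by rw [← h2]; exact hfpf d
          rw [if_neg this, if_pos h2]
        · have h3 : α d = (Quotient.mk α.cycleSetoid d).out := by
            conv_lhs => rw [h2]
            exact hinv _
          have : ¬ d = (Quotient.mk α.cycleSetoid d).out := by rw [← h3]; exact (hfpf d).symm
          rw [if_pos h3, if_neg this, inv_inv]
      · funext e
        simp
  refine Fintype.sum_equiv (Equiv.ofBijective _ hb) _ _ fun κ => ?_
  rw [flow_edge_prod α hinv hfpf]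
  refine Finset.prod_congr rfl fun e _ => ?_
  rw [κ.2]; rfl

theorem flow_const {D J : Type} (σ α : Equiv.Perm D) (hconn : MapConnected σ α) (b : D → J)
    (h1 : ∀ d, b (σ d) = b d) (h2 : ∀ d, b (σ (α d)) = b d) (d d' : D) : b d' = b d := by
  have h3 : ∀ g ∈ Subgroup.closure ({σ, α} : Set (Equiv.Perm D)), ∀ d, b (g d) = b d := by
    intro g hg
    induction hg using Subgroup.closure_induction with
    | mem x hx =>
      rcases hx with rfl | rfl
      · exact h1
      · intro d; rw [← h1, h2]
    | one => intro d; rfl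
    | mul x y _ _ hx hy => intro d; rw [Equiv.Perm.mul_apply, hx, hy]
    | inv x _ hx => intro d; rw [← hx (x⁻¹ d), ← Equiv.Perm.mul_apply, mul_inv_cancel, Equiv.Perm.one_apply]
  obtain ⟨g, hg, rfl⟩ := hconn d d'
  exact h3 g hg d

theorem flow_const_cycle {D J : Type} [Finite D] (τ : Equiv.Perm D) (b : D → J)
    (h1 : ∀ d, b d = b (τ d)) (d d' : D) (h : τ.SameCycle d d') : b d = b d' := by
  obtain ⟨n, rfl⟩ := h.exists_nat_pow_eq
  clear h
  induction n with
  | zero => rfl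
  | succ n ih => rw [pow_succ', Equiv.Perm.mul_apply, ← h1, ih]

open scoped Classical in
theorem flow_core {D G ι : Type} [Fintype D] [Nonempty D] [Group G] [Fintype G] [Fintype ι]
    (σ α : Equiv.Perm D)
    (hinv : ∀ d, α (α d) = d) (hfpf : ∀ d, α d ≠ d)
    (hconn : MapConnected σ α) (n : ι → ℕ)
    (R : G →* Matrix (Σ i, Fin (n i)) (Σ i, Fin (n i)) ℂ)
    (hcol : ∀ g, ∑ x : (Σ i, Fin (n i)), (n x.1 : ℂ) * R g x x =
      if g = 1 then (Fintype.card G : ℂ) else 0)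
    (horth : ∀ x y z w, ∑ g, R g x y * R g⁻¹ z w =
      if x = w ∧ y = z ∧ x.1 = y.1 then (Fintype.card G : ℂ) / n x.1 else 0) :
    (Nat.card {κ : D → G // IsGFlow σ α κ} : ℂ) * (Fintype.card G : ℂ) ^ σ.cycleCount =
      ∑ i, (n i : ℂ) ^ (σ * α).cycleCount *
        ((n i : ℂ) ^ σ.cycleCount * ((Fintype.card G : ℂ) / n i) ^ α.cycleCount) := by
  have h1 : (Nat.card {κ : D → G // IsGFlow σ α κ} : ℂ) * (Fintype.card G : ℂ) ^ σ.cycleCount =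
      ∑ κ : {κ : D → G // IsGLabelling α κ},
        if ∀ d, aroundProd σ κ.1 d = 1 then (Fintype.card G : ℂ) ^ σ.cycleCount else 0 := by
    rw [← Finset.sum_filter, Finset.sum_const, nsmul_eq_mul, ← Fintype.card_subtype]
    congr 2
    exact (Nat.card_congr (Equiv.subtypeSubtypeEquivSubtypeInter (IsGLabelling α)
      (fun κ : D → G => ∀ d, aroundProd σ κ d = 1))).symm.trans Nat.card_eq_fintype_card
  rw [h1, Finset.sum_congr rfl fun κ _ =>
    flow_vertex σ R (fun x : (Σ i, Fin (n i)) => (n x.1 : ℂ)) hcol κ.1, Finset.sum_comm]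
  simp only [← Finset.mul_sum]
  have h2 : ∀ p : D → (Σ i, Fin (n i)),
      ∑ κ : {κ : D → G // IsGLabelling α κ}, ∏ d, R (κ.1 d) (p d) (p (σ d)) =
      if (∀ d, p d = p (σ (α d))) ∧ (∀ d, (p (σ d)).1 = (p d).1) then
        ∏ e : Quotient α.cycleSetoid, ((Fintype.card G : ℂ) / n (p e.out).1) else 0 := by
    intro p
    rw [flow_edge_sum α hinv hfpf (fun d g => R g (p d) (p (σ d)))]
    simp only [horth]
    rw [Finset.prod_ite_zero]
    suffices hiff : (∀ e ∈ (Finset.univ : Finset (Quotient α.cycleSetoid)),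
        p e.out = p (σ (α e.out)) ∧ p (σ e.out) = p (α e.out) ∧
          (p e.out).1 = (p (σ e.out)).1) ↔
        ((∀ d, p d = p (σ (α d))) ∧ (∀ d, (p (σ d)).1 = (p d).1)) by
      split_ifs with ha hb hb
      · rfl
      · exact absurd (hiff.1 ha) hb
      · exact absurd (hiff.2 hb) ha
      · rfl
    simp only [Finset.mem_univ, true_implies]
    constructor
    · intro h
      constructor
      · intro d
        rcases flow_edge_cases α hinv d with h2 | h2
        · rw [h2]; exact (h _).1
        · rw [h2, hinv]; exact (h _).2.1.symm
      · intro d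
        rcases flow_edge_cases α hinv d with h2 | h2
        · rw [h2]; exact (h _).2.2.symm
        · rw [h2, ← (h _).1, ← (h _).2.1]; exact (h _).2.2
    · rintro ⟨ha, hb⟩ e
      refine ⟨ha _, ?_, (hb _).symm⟩
      rw [ha (α e.out), hinv]
  simp only [h2, mul_ite, mul_zero]
  rw [← Finset.sum_filter]
  let Φ : (Σ i, (Quotient (σ * α).cycleSetoid → Fin (n i))) → (D → (Σ i, Fin (n i))) :=
    fun s d => ⟨s.1, s.2 (Quotient.mk _ d)⟩
  have h3 : ∑ p : D → (Σ i, Fin (n i)) with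
        (∀ d, p d = p (σ (α d))) ∧ (∀ d, (p (σ d)).1 = (p d).1),
        (∏ v : Quotient σ.cycleSetoid, (n (p v.out).1 : ℂ)) *
          ∏ e : Quotient α.cycleSetoid, ((Fintype.card G : ℂ) / n (p e.out).1) =
      ∑ s : (Σ i, (Quotient (σ * α).cycleSetoid → Fin (n i))),
        ((n s.1 : ℂ) ^ σ.cycleCount * ((Fintype.card G : ℂ) / n s.1) ^ α.cycleCount) := by
    symm
    refine Finset.sum_bij (fun s _ => Φ s) ?_ ?_ ?_ ?_
    · intro s _
      simp only [Finset.mem_filter, Finset.mem_univ, true_and]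
      refine ⟨fun d => ?_, fun d => rfl⟩
      have : Quotient.mk (σ * α).cycleSetoid d = Quotient.mk (σ * α).cycleSetoid (σ (α d)) :=
        (flow_mk_alpha (σ * α) d).symm
      simp only [Φ, this]
    · rintro ⟨i, q⟩ _ ⟨i', q'⟩ _ h
      obtain ⟨d0⟩ := ‹Nonempty D›
      have h4 := congrFun h d0
      have h5 : i = i' := congrArg Sigma.fst h4
      subst h5
      congr 1
      funext c
      induction c using Quotient.inductionOn with
      | h d =>
        have h6 := congrFun h d
        simpa [Φ] using h6
    · intro p hp
      simp only [Finset.mem_filter, Finset.mem_univ, true_and] at hp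
      obtain ⟨d0⟩ := ‹Nonempty D›
      have h4 : ∀ d, (p d).1 = (p d0).1 := fun d =>
        flow_const σ α hconn (fun d => (p d).1) hp.2 (fun d => congrArg Sigma.fst (hp.1 d).symm) d0 d
      have h5 : ∀ d, ∃ x : Fin (n (p d0).1), p d = ⟨(p d0).1, x⟩ := by
        intro d
        have := h4 d
        rcases hpd : p d with ⟨i, x⟩
        rw [hpd] at this
        simp only at this
        subst this
        exact ⟨x, rfl⟩
      choose x hx using h5
      refine ⟨⟨(p d0).1, fun c => x c.out⟩, Finset.mem_univ _, ?_⟩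
      funext d
      simp only [Φ]
      rw [← hx]
      exact flow_const_cycle (σ * α) p hp.1 _ _ (Quotient.exact (Quotient.out_eq (Quotient.mk (σ * α).cycleSetoid d)))
    · intro s _
      simp only [Φ, Finset.prod_const, Finset.card_univ, Equiv.Perm.cycleCount,
        Nat.card_eq_fintype_card]
  rw [h3, Fintype.sum_sigma]
  refine Finset.sum_congr rfl fun i _ => ?_
  simp only [Finset.sum_const, Finset.card_univ, nsmul_eq_mul, Fintype.card_fun, Fintype.card_fin,
    Equiv.Perm.cycleCount, Nat.card_eq_fintype_card, Nat.cast_pow]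

open CategoryTheory in
/-- The number of `G`-flows on a connected combinatorial map `M = (D, σ, α)` equals
`|G|^(|E|-|V|) · ∑_λ χ_λ(1)^(|V|-|E|+|F|)`. -/
theorem count_G_flows
    {D : Type} [Fintype D] [Nonempty D] (σ α : Equiv.Perm D)
    (hinv : ∀ d, α (α d) = d) (hfpf : ∀ d, α d ≠ d)
    (hconn : MapConnected σ α)
    {G : Type} [Group G] [Fintype G]
    (ι : Type) [Fintype ι] (ρ : ι → FDRep ℂ G)
    (hsimple : ∀ i, Simple (ρ i))
    (hpairwise : ∀ i j, Nonempty (ρ i ≅ ρ j) → i = j)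
    (hcomplete : ∀ V : FDRep ℂ G, Simple V → ∃ i, Nonempty (V ≅ ρ i)) :
    (Nat.card {κ : D → G // IsGFlow σ α κ} : ℂ)
      = (Nat.card G : ℂ) ^ ((α.cycleCount : ℤ) - (σ.cycleCount : ℤ)) *
        ∑ i, ((ρ i).character 1) ^
          ((σ.cycleCount : ℤ) - (α.cycleCount : ℤ) + ((σ * α).cycleCount : ℤ)) := by
  classical
  let n : ι → ℕ := fun i => Module.finrank ℂ (ρ i)
  let R : G →* Matrix (Σ i, Fin (n i)) (Σ i, Fin (n i)) ℂ :=
    { toFun := fun g => Matrix.blockDiagonal' (fun i => flowMat (ρ i) g)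
      map_one' := by
        simp only [flowMat_one]
        exact Matrix.blockDiagonal'_one
      map_mul' := fun g h => by
        simp only [flowMat_mul]
        exact Matrix.blockDiagonal'_mul _ _ }
  have hR : ∀ g x y, R g x y = Matrix.blockDiagonal' (fun i => flowMat (ρ i) g) x y :=
    fun _ _ _ => rfl
  have hn : ∀ i, (n i : ℂ) ≠ 0 := fun i => by
    have := hsimple i
    exact Nat.cast_ne_zero.2 (flow_finrank_ne (ρ i))
  have hcol : ∀ g, ∑ x : (Σ i, Fin (n i)), (n x.1 : ℂ) * R g x x =
      if g = 1 then (Fintype.card G : ℂ) else 0 := by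
    intro g
    have h := flow_col ι ρ hsimple hpairwise hcomplete g
    rw [Fintype.sum_sigma]
    convert h using 1
    refine Finset.sum_congr rfl fun i _ => ?_
    rw [Matrix.trace, Finset.mul_sum]
    refine Finset.sum_congr rfl fun a _ => ?_
    rw [hR, Matrix.blockDiagonal'_apply_eq]; rfl
  have horth : ∀ x y z w, ∑ g, R g x y * R g⁻¹ z w =
      if x = w ∧ y = z ∧ x.1 = y.1 then (Fintype.card G : ℂ) / n x.1 else 0 := by
    rintro ⟨i, a⟩ ⟨i', b⟩ ⟨j, c⟩ ⟨j', e⟩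
    simp only [hR]
    by_cases h1 : i = i'
    · subst h1
      by_cases h2 : j = j'
      · subst h2
        simp only [Matrix.blockDiagonal'_apply_eq]
        have := hsimple i
        have := hsimple j
        by_cases h3 : i = j
        · subst h3
          rw [flowMat_orth_eq]
          simp only [Sigma.mk.injEq, heq_eq_eq, true_and, and_true]
          rfl
        · rw [flowMat_orth_ne _ _ (fun h => h3 (hpairwise _ _ h).symm), if_neg]
          rintro ⟨h, -⟩
          exact h3 (congrArg Sigma.fst h)
      · rw [if_neg]
        · simp [Matrix.blockDiagonal'_apply_ne _ _ _ h2]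
        · rintro ⟨h, h', -⟩
          exact h2 ((congrArg Sigma.fst h').symm.trans (congrArg Sigma.fst h))
    · rw [if_neg]
      · simp [Matrix.blockDiagonal'_apply_ne _ _ _ h1]
      · rintro ⟨-, -, h⟩
        exact h1 h
  have hcore := flow_core σ α hinv hfpf hconn n R hcol horth
  have hG : (Fintype.card G : ℂ) ≠ 0 := Nat.cast_ne_zero.2 Fintype.card_ne_zero
  rw [← mul_left_inj' (pow_ne_zero σ.cycleCount hG), hcore, Nat.card_eq_fintype_card,
    Finset.mul_sum, Finset.sum_mul]
  refine Finset.sum_congr rfl fun i _ => ?_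
  have h1 : (ρ i).character 1 = (n i : ℂ) := FDRep.char_one (ρ i)
  rw [h1, zpow_add₀ (hn i), zpow_sub₀ (hn i), zpow_sub₀ hG]
  simp only [zpow_natCast, div_pow]
  have := hn i
  field_simp
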